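/- Let m ≥ 1 and let F = (f_1, f_2) be a simple multigerm in ℂ^n with f_1 = (t², t^{2m+1}, 0, …, 0), with the 2-jet of f_2 equal to (0, t², 0, …, 0), and with the invariant pair of f_2 greater than or equal to (2, 2m+1). Then F is stably A-equivalent to a multigerm with first component (t², t^{2m+1}) (padded with zeros) and second component one of the following, where n is an integer with m ≤ n: (t^{2n+1}, t²); (t^{2n+1}, t², t^{2n+3}); (0, t², t^{2n+1}). -/

import Mathlib

/-!
The multigerm is stabilised to `ℂ^(d+3)` and the coordinates are written `x, y, z_3, z_4, …`.

After a reparametrisation the second component has `y = t²`. Split every other coordinate into its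
even and odd part; let `2k+1` be the least order of an odd part. It is a value of the second
component, so the condition on the invariant pair shows that `k` exists and `m ≤ k`
(`odd_values`, `classification_aux`).

The equation `P = y² - x^(2m+1)` of the cusp vanishes on the first component. On the second one it
is `t⁴` times a unit of the local ring `ℂ{t²} + t^(2k+1) ℂ{t²}`, hence adding multiples of `P` to
the coordinates removes all even terms and all odd terms of order at least `2k+5` (`kill_even`).
Every coordinate other than `y` is now `t^(2k+1) (a_j + b_j t²)`, with some `a_j ≠ 0`
(`normal_forms`):

* if `a_j ≠ 0` for some `z_j`, then `z_j`, which vanishes on the first component, clears the other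
  coordinates and the result is `(0, t², t^(2k+1))` (`aequiv_third`);
* otherwise a coordinate change preserving the cusp, weighted by a function of `y`, brings `x` to
  `t^(2k+1)` (`aequiv_weight`), and the remaining terms `b_j t^(2k+3)` of the `z_j` give
  `(t^(2k+1), t², t^(2k+3))` if some `b_j ≠ 0` (`aequiv_second`), and `(t^(2k+1), t²)` if not.

That `d ≥ 2` follows from the intersection condition on the two components (`two_le_dim`).
-/

open scoped Topology

namespace CurveSing

/-- Pad a curve in `ℂ^d` to a curve in `ℂ^n` by appending zero coordinates. -/
def pad (d n : ℕ) (f : ℂ → Fin d → ℂ) : ℂ → Fin n → ℂ :=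
  fun t j => if hj : (j : ℕ) < d then f t ⟨(j : ℕ), hj⟩ else 0

/-- The curve `t ↦ (0,…,0,t,0,…,0)` (the `i`-th coordinate axis of `ℂ^n`). -/
def axis (n i : ℕ) : ℂ → Fin n → ℂ := fun t j => if (j : ℕ) = i then t else 0

/-- The multigerm consisting of the `n` coordinate axes of `ℂ^n`. -/
def Gn (n : ℕ) : Fin n → ℂ → Fin n → ℂ := fun i => axis n (i : ℕ)

/-- A (representative of a) curve germ in `ℂ^n`. -/
def IsCurveGerm (n : ℕ) (f : ℂ → Fin n → ℂ) : Prop :=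
  AnalyticAt ℂ f 0 ∧ f 0 = 0

/-- A multigerm with `k` components in `ℂ^n`: each component is a curve germ and the
images of sufficiently small representatives of distinct components meet only at `0`. -/
def IsMultigerm (n k : ℕ) (F : Fin k → ℂ → Fin n → ℂ) : Prop :=
  (∀ i, IsCurveGerm n (F i)) ∧
  ∃ ε > (0 : ℝ), ∀ i j : Fin k, i ≠ j → ∀ s t : ℂ,
    ‖s‖ < ε → ‖t‖ < ε → F i s = F j t → F i s = 0

/-- A germ of a biholomorphism `(E,0) → (E,0)`. -/
def IsBiholoGerm {E : Type*} [NormedAddCommGroup E] [NormedSpace ℂ E] (g : E → E) : Prop :=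
  AnalyticAt ℂ g 0 ∧ g 0 = 0 ∧
  ∃ g' : E → E, AnalyticAt ℂ g' 0 ∧ g' 0 = 0 ∧
    (∀ᶠ x in 𝓝 (0 : E), g' (g x) = x) ∧ (∀ᶠ x in 𝓝 (0 : E), g (g' x) = x)

/-- `A`-equivalence of multigerms with `k` components in `ℂ^n`. -/
def AEquiv (n k : ℕ) (F F' : Fin k → ℂ → Fin n → ℂ) : Prop :=
  ∃ g : (Fin n → ℂ) → Fin n → ℂ, IsBiholoGerm g ∧
    ∃ h : Fin k → ℂ → ℂ, (∀ i, IsBiholoGerm (h i)) ∧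
      ∀ i, (fun t => g (F i t)) =ᶠ[𝓝 (0 : ℂ)] fun t => F' i (h i t)

/-- Stable `A`-equivalence: the two multigerms become `A`-equivalent after the standard
inclusions into a common `ℂ^N`. -/
def StablyAEquiv (n n' k : ℕ) (F : Fin k → ℂ → Fin n → ℂ)
    (F' : Fin k → ℂ → Fin n' → ℂ) : Prop :=
  ∃ N, n ≤ N ∧ n' ≤ N ∧
    AEquiv N k (fun i => pad n N (F i)) (fun i => pad n' N (F' i))

/-- The `m`-jet of a curve, recorded as the tuple of iterated derivatives at `0`
of orders `0,…,m` (this determines and is determined by the degree-`m` Taylor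
polynomial at `0`). -/
noncomputable def jet (n m : ℕ) (f : ℂ → Fin n → ℂ) : Fin (m + 1) → Fin n → ℂ :=
  fun i => iteratedDeriv (i : ℕ) f 0

/-- The `m`-jet of a multigerm. -/
noncomputable def jetF (n k m : ℕ) (F : Fin k → ℂ → Fin n → ℂ) : Fin k → Fin (m + 1) → Fin n → ℂ :=
  fun i => jet n m (F i)

/-- A multigerm is simple if some neighbourhood of one of its jets meets only finitely
many `A`-equivalence classes of multigerms. -/
def Simple (n k : ℕ) (F : Fin k → ℂ → Fin n → ℂ) : Prop :=
  ∃ m : ℕ, ∃ U : Set (Fin k → Fin (m + 1) → Fin n → ℂ), IsOpen U ∧ jetF n k m F ∈ U ∧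
    ∃ (N : ℕ) (R : Fin N → Fin k → ℂ → Fin n → ℂ),
      ∀ G : Fin k → ℂ → Fin n → ℂ, IsMultigerm n k G → jetF n k m G ∈ U →
        ∃ i, AEquiv n k G (R i)

/-- A curve germ is regular if its derivative at `0` does not vanish. -/
def IsRegular (n : ℕ) (f : ℂ → Fin n → ℂ) : Prop := deriv f 0 ≠ 0

/-- `F` is stably `A`-equivalent to the pair with first component the regular curve
`(t,0,…,0)` and second component `g` (a curve in `ℂ^{d'}`). -/
def PairNF (d : ℕ) (F : Fin 2 → ℂ → Fin d → ℂ) (d' : ℕ) (g : ℂ → Fin d' → ℂ) : Prop :=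
  StablyAEquiv d d' 2 F ![axis d' 0, g]

end CurveSing

namespace CurveSing

/-- The order of vanishing of a function `ℂ → ℂ` at `0`: the least order of a
non-vanishing iterated derivative at `0`. -/
noncomputable def ordAt (f : ℂ → ℂ) : ℕ := sInf {k | iteratedDeriv k f 0 ≠ 0}

/-- The value semigroup `S₀(f)` of a curve germ: the set of orders `ord (φ ∘ f)` over
analytic germs `φ : (ℂ^n,0) → (ℂ,0)` with `φ ∘ f` not identically zero near `0`. -/
def valueSemigroup (n : ℕ) (f : ℂ → Fin n → ℂ) : Set ℕ :=
  { v | ∃ φ : (Fin n → ℂ) → ℂ, AnalyticAt ℂ φ 0 ∧ φ 0 = 0 ∧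
      (∃ k, iteratedDeriv k (fun t => φ (f t)) 0 ≠ 0) ∧
      v = ordAt fun t => φ (f t) }

/-- The first entry `p` of the invariant pair: the smallest positive element of the
value semigroup. -/
noncomputable def invPairFst (n : ℕ) (f : ℂ → Fin n → ℂ) : ℕ :=
  sInf {v | v ∈ valueSemigroup n f ∧ 0 < v}

/-- The second entry `q` of the invariant pair: the smallest element of the value
semigroup greater than `p` and not a multiple of `p`. -/
noncomputable def invPairSnd (n : ℕ) (f : ℂ → Fin n → ℂ) : ℕ :=
  sInf {v | v ∈ valueSemigroup n f ∧ invPairFst n f < v ∧ ¬ invPairFst n f ∣ v}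

end CurveSing

namespace CurveSing

/-! ### Analytic germs -/

lemma analyticAt_coord {N : ℕ} (j : Fin N) (x : Fin N → ℂ) :
    AnalyticAt ℂ (fun v : Fin N → ℂ => v j) x :=
  (ContinuousLinearMap.proj (R := ℂ) (φ := fun _ : Fin N => ℂ) j).analyticAt x

lemma hasFDerivAt_coord {N : ℕ} (j : Fin N) (x : Fin N → ℂ) :
    HasFDerivAt (fun v : Fin N → ℂ => v j)
      (ContinuousLinearMap.proj j : (Fin N → ℂ) →L[ℂ] ℂ) x :=
  hasFDerivAt_apply j x

lemma eventually_comp {E F : Type*} [TopologicalSpace E] [Zero E] [TopologicalSpace F] [Zero F]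
    {f : E → F} (hf : ContinuousAt f 0) (h0 : f 0 = 0) {p : F → Prop}
    (h : ∀ᶠ x in 𝓝 (0 : F), p x) : ∀ᶠ t in 𝓝 (0 : E), p (f t) := by
  have : Filter.Tendsto f (𝓝 0) (𝓝 0) := by simpa [ContinuousAt, h0] using hf
  exact this.eventually h

lemma analyticAt_comp_zero {E F G : Type*} [NormedAddCommGroup E] [NormedSpace ℂ E]
    [NormedAddCommGroup F] [NormedSpace ℂ F] [NormedAddCommGroup G] [NormedSpace ℂ G]
    {f : F → G} {h : E → F} (hf : AnalyticAt ℂ f 0) (hh : AnalyticAt ℂ h 0) (h0 : h 0 = 0) :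
    AnalyticAt ℂ (fun t => f (h t)) 0 := by
  rw [← h0] at hf
  exact hf.comp hh

/-- Hadamard's lemma in one variable. -/
lemma exists_eq_add_mul {f : ℂ → ℂ} (hf : AnalyticAt ℂ f 0) :
    ∃ g : ℂ → ℂ, AnalyticAt ℂ g 0 ∧ ∀ s, f s = f 0 + s * g s := by
  obtain ⟨p, hp⟩ := hf
  refine ⟨dslope f 0, hp.has_fpower_series_dslope_fslope.analyticAt, fun s => ?_⟩
  have := sub_smul_dslope f 0 s
  simp only [sub_zero, smul_eq_mul] at this
  rw [this]; ring

/-- The power series `∑ c (2 n + i) sⁿ` converges near `0` whenever `∑ c n tⁿ` does. -/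
lemma exists_analytic_subseries {f : ℂ → ℂ} {p : FormalMultilinearSeries ℂ ℂ ℂ}
    (hp : HasFPowerSeriesAt f p 0) (i : ℕ) :
    ∃ a : ℂ → ℂ, AnalyticAt ℂ a 0 ∧
      ∀ᶠ s in 𝓝 (0 : ℂ), HasSum (fun n => p.coeff (2 * n + i) * s ^ n) (a s) := by
  obtain ⟨r, hr0, hr⟩ := ENNReal.lt_iff_exists_nnreal_btwn.1 hp.radius_pos
  have hr0' : 0 < r := by exact_mod_cast hr0
  obtain ⟨C, hC, hb⟩ := p.norm_mul_pow_le_of_lt_radius hr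
  let q : FormalMultilinearSeries ℂ ℂ ℂ :=
    FormalMultilinearSeries.ofScalars ℂ (fun n => p.coeff (2 * n + i))
  have hq : ((r ^ 2 : NNReal) : ENNReal) ≤ q.radius := by
    refine q.le_radius_of_bound (C / r ^ i) fun n => ?_
    rw [FormalMultilinearSeries.ofScalars_norm, le_div_iff₀ (by positivity)]
    have := hb (2 * n + i)
    rw [FormalMultilinearSeries.norm_apply_eq_norm_coef] at this
    calc _ = ‖p.coeff (2 * n + i)‖ * (r : ℝ) ^ (2 * n + i) := by
            push_cast; rw [pow_add, pow_mul]; ring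
      _ ≤ C := this
  have hq0 : 0 < q.radius := lt_of_lt_of_le (by positivity) hq
  have hs := (q.hasFPowerSeriesOnBall hq0).hasFPowerSeriesAt
  refine ⟨q.sum, hs.analyticAt, ?_⟩
  have := hs.eventually_hasSum
  filter_upwards [this] with s h
  simpa [q, FormalMultilinearSeries.coeff_ofScalars, mul_comm] using h

/-- Decomposition of a germ into its even and odd part. -/
lemma exists_even_odd {f : ℂ → ℂ} (hf : AnalyticAt ℂ f 0) :
    ∃ a b : ℂ → ℂ, AnalyticAt ℂ a 0 ∧ AnalyticAt ℂ b 0 ∧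
      ∀ᶠ t in 𝓝 (0 : ℂ), f t = a (t ^ 2) + t * b (t ^ 2) := by
  obtain ⟨p, hp⟩ := hf
  obtain ⟨a, ha, has⟩ := exists_analytic_subseries hp 0
  obtain ⟨b, hb, hbs⟩ := exists_analytic_subseries hp 1
  refine ⟨a, b, ha, hb, ?_⟩
  have hsq : ContinuousAt (fun t : ℂ => t ^ 2) 0 := by fun_prop
  filter_upwards [hp.eventually_hasSum, eventually_comp hsq (by simp) has,
    eventually_comp hsq (by simp) hbs] with t h1 h2 h3
  have h1' : HasSum (fun n => p.coeff n * t ^ n) (f t) := by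
    simpa [mul_comm] using h1
  have h3' := h3.mul_left t
  refine h1'.unique (HasSum.even_add_odd ?_ ?_)
  · refine h2.congr_fun ?_ 
    intro n; simp [pow_mul]
  · refine h3'.congr_fun ?_
    intro n; simp only [pow_succ, pow_mul]; ring

/-- Roots of units in the ring of germs. -/
lemma exists_root {u : ℂ → ℂ} (hu : AnalyticAt ℂ u 0) (h0 : u 0 ≠ 0) {e : ℕ} (he : e ≠ 0) :
    ∃ ρ : ℂ → ℂ, AnalyticAt ℂ ρ 0 ∧ ρ 0 ≠ 0 ∧ ∀ᶠ t in 𝓝 (0 : ℂ), ρ t ^ e = u t := by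
  obtain ⟨c, hc⟩ := IsAlgClosed.exists_pow_nat_eq (u 0) (Nat.pos_of_ne_zero he)
  have hc0 : c ≠ 0 := by rintro rfl; exact h0 (by rw [← hc, zero_pow he])
  have hdiv : AnalyticAt ℂ (fun t => u t / u 0) 0 := hu.div analyticAt_const h0
  have hlog : AnalyticAt ℂ (fun t => Complex.log (u t / u 0)) 0 :=
    hdiv.clog (by simp [h0])
  refine ⟨fun t => c * Complex.exp (Complex.log (u t / u 0) / e), ?_, ?_, ?_⟩
  · exact analyticAt_const.mul (AnalyticAt.cexp (hlog.div analyticAt_const (by exact_mod_cast he)))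
  · exact mul_ne_zero hc0 (Complex.exp_ne_zero _)
  · filter_upwards [hu.continuousAt.eventually_ne h0] with t ht
    rw [mul_pow, hc, ← Complex.exp_nat_mul, mul_div_cancel₀ _ (by exact_mod_cast he),
      Complex.exp_log (div_ne_zero ht h0), mul_div_cancel₀ _ h0]

/-! ### Germs of biholomorphisms -/

lemma isBiholoGerm_of_fderiv {E : Type*} [NormedAddCommGroup E] [NormedSpace ℂ E]
    [FiniteDimensional ℂ E] {g : E → E} (hg : AnalyticAt ℂ g 0) (h0 : g 0 = 0)
    {L : E →L[ℂ] E} (hL : HasFDerivAt g L 0) (hinj : ∀ v, L v = 0 → v = 0) :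
    IsBiholoGerm g := by
  have : CompleteSpace E := FiniteDimensional.complete ℂ E
  let e : E ≃L[ℂ] E := (LinearEquiv.ofInjectiveEndo (L : E →ₗ[ℂ] E)
    ((injective_iff_map_eq_zero _).2 hinj)).toContinuousLinearEquiv
  have he : (e : E →L[ℂ] E) = L := by
    ext v; simp [e]
  have hc : ContDiffAt ℂ ⊤ g 0 := hg.contDiffAt
  have hL' : HasFDerivAt g (e : E →L[ℂ] E) 0 := he ▸ hL
  let R := hc.toOpenPartialHomeomorph g hL' (by simp)
  have hs : (0 : E) ∈ R.source := hc.mem_toOpenPartialHomeomorph_source hL' (by simp)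
  have ht : (0 : E) ∈ R.target := by
    simpa [h0] using hc.image_mem_toOpenPartialHomeomorph_target hL' (by simp)
  refine ⟨hg, h0, R.symm, ?_, ?_, ?_, ?_⟩
  · have := hc.to_localInverse hL' (by simp)
    rw [h0] at this
    exact this.analyticAt
  · have := R.left_inv hs
    rwa [show R 0 = 0 from h0] at this
  · exact R.eventually_left_inverse hs
  · exact R.eventually_right_inverse ht

lemma IsBiholoGerm.comp {E : Type*} [NormedAddCommGroup E] [NormedSpace ℂ E] {f g : E → E}
    (hf : IsBiholoGerm f) (hg : IsBiholoGerm g) : IsBiholoGerm fun x => f (g x) := by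
  obtain ⟨fa, f0, f', fa', f0', fl, fr⟩ := hf
  obtain ⟨ga, g0, g', ga', g0', gl, gr⟩ := hg
  refine ⟨analyticAt_comp_zero fa ga g0, by simp [f0, g0], fun x => g' (f' x),
    analyticAt_comp_zero ga' fa' f0', by simp [f0', g0'], ?_, ?_⟩
  · filter_upwards [gl, eventually_comp ga.continuousAt g0 fl] with x h1 h2
    rw [h2, h1]
  · filter_upwards [fr, eventually_comp fa'.continuousAt f0' gr] with x h1 h2
    rw [h2, h1]

lemma isBiholoGerm_id {E : Type*} [NormedAddCommGroup E] [NormedSpace ℂ E] :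
    IsBiholoGerm fun x : E => x :=
  ⟨analyticAt_id, rfl, fun x => x, analyticAt_id, rfl, by simp, by simp⟩

lemma isBiholoGerm_mul {w : ℂ → ℂ} (hw : AnalyticAt ℂ w 0) (h0 : w 0 ≠ 0) :
    IsBiholoGerm fun t => t * w t := by
  have hd : HasDerivAt (fun t => t * w t) (w 0) 0 := by
    simpa using (hasDerivAt_id' (0 : ℂ)).fun_mul hw.differentiableAt.hasDerivAt
  refine isBiholoGerm_of_fderiv (analyticAt_id.mul hw) (by simp) hd.hasFDerivAt ?_
  intro v hv
  simpa [h0] using hv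

lemma AEquiv.trans {n k : ℕ} {F G H : Fin k → ℂ → Fin n → ℂ}
    (h1 : AEquiv n k F G) (h2 : AEquiv n k G H) : AEquiv n k F H := by
  obtain ⟨g, hg, a, ha, hga⟩ := h1
  obtain ⟨g', hg', b, hb, hgb⟩ := h2
  refine ⟨fun x => g' (g x), hg'.comp hg, fun i t => b i (a i t), fun i => (hb i).comp (ha i),
    fun i => ?_⟩
  filter_upwards [hga i, eventually_comp (ha i).1.continuousAt (ha i).2.1 (hgb i)] with t e1 e2
  rw [e1, e2]

end CurveSing

namespace CurveSing

/-! ### Elements of the local ring of a double point -/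

/-- The germs in `ℂ{t²} + t^(2k+1) ℂ{t²}`, the local ring of the curve `(t², t^(2k+1))`. -/
def InRing (k : ℕ) (q : ℂ → ℂ) : Prop :=
  ∃ A B : ℂ → ℂ, AnalyticAt ℂ A 0 ∧ AnalyticAt ℂ B 0 ∧
    ∀ᶠ t in 𝓝 (0 : ℂ), q t = A (t ^ 2) + t ^ (2 * k + 1) * B (t ^ 2)

lemma InRing.of_even {k : ℕ} {A : ℂ → ℂ} (hA : AnalyticAt ℂ A 0) :
    InRing k fun t => A (t ^ 2) :=
  ⟨A, fun _ => 0, hA, analyticAt_const, by simp⟩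

lemma InRing.sub {k : ℕ} {p q : ℂ → ℂ} (hp : InRing k p) (hq : InRing k q) :
    InRing k fun t => p t - q t := by
  obtain ⟨A, B, hA, hB, h⟩ := hp
  obtain ⟨A', B', hA', hB', h'⟩ := hq
  refine ⟨fun s => A s - A' s, fun s => B s - B' s, hA.sub hA', hB.sub hB', ?_⟩
  filter_upwards [h, h'] with t e e'
  rw [e, e']; ring

lemma InRing.mul {k : ℕ} {p q : ℂ → ℂ} (hp : InRing k p) (hq : InRing k q) :
    InRing k fun t => p t * q t := by
  obtain ⟨A, B, hA, hB, h⟩ := hp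
  obtain ⟨A', B', hA', hB', h'⟩ := hq
  refine ⟨fun s => A s * A' s + s ^ (2 * k + 1) * (B s * B' s), fun s => A s * B' s + B s * A' s,
    (hA.mul hA').add ((analyticAt_id.pow _).mul (hB.mul hB')),
    (hA.mul hB').add (hB.mul hA'), ?_⟩
  filter_upwards [h, h'] with t e e'
  rw [e, e']; ring

lemma InRing.pow {k : ℕ} {p : ℂ → ℂ} (hp : InRing k p) (n : ℕ) :
    InRing k fun t => p t ^ n := by
  induction n with
  | zero => simpa using InRing.of_even (k := k) (A := fun _ => 1) analyticAt_const
  | succ n ih => simpa only [pow_succ] using ih.mul hp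

/-- A unit of `ℂ{t}` lying in the ring has its inverse there:
`1 / (A + T B) = (A - T B) / (A² - T² B²)` and `T² = t^(4k+2)` is even. -/
lemma InRing.inv {k : ℕ} {p : ℂ → ℂ} (hp : InRing k p) (h0 : p 0 ≠ 0) :
    InRing k fun t => (p t)⁻¹ := by
  obtain ⟨A, B, hA, hB, h⟩ := hp
  have hA0 : A 0 ≠ 0 := by simpa [h.self_of_nhds] using h0
  have hD : AnalyticAt ℂ (fun s => A s ^ 2 - s ^ (2 * k + 1) * B s ^ 2) 0 :=
    (hA.pow 2).sub ((analyticAt_id.pow _).mul (hB.pow 2))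
  have hD0 : A 0 ^ 2 - 0 ^ (2 * k + 1) * B 0 ^ 2 ≠ 0 := by simpa using hA0
  refine ⟨fun s => A s / (A s ^ 2 - s ^ (2 * k + 1) * B s ^ 2),
    fun s => - B s / (A s ^ 2 - s ^ (2 * k + 1) * B s ^ 2), hA.div hD hD0, hB.neg.div hD hD0, ?_⟩
  have hsq : ContinuousAt (fun t : ℂ => t ^ 2) 0 := by fun_prop
  filter_upwards [h, eventually_comp hsq (by simp) (hD.continuousAt.eventually_ne hD0)] with t e hne
  have hfac : A (t ^ 2) ^ 2 - (t ^ 2) ^ (2 * k + 1) * B (t ^ 2) ^ 2 =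
      (A (t ^ 2) + t ^ (2 * k + 1) * B (t ^ 2)) * (A (t ^ 2) - t ^ (2 * k + 1) * B (t ^ 2)) := by
    ring
  rw [e]
  rw [hfac] at hne ⊢
  have h1 := left_ne_zero_of_mul hne
  have h2 := right_ne_zero_of_mul hne
  field_simp
  ring

/-! ### Normalising the second component -/

/-- The cusp `(t², t^(2m+1))` in the coordinates `i0`, `i1` of `ℂ^N`. -/
def cusp (N m : ℕ) (i0 i1 : Fin N) : ℂ → Fin N → ℂ :=
  fun t j => if j = i0 then t ^ 2 else if j = i1 then t ^ (2 * m + 1) else 0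

lemma aequiv_pair {N : ℕ} {a b a' b' : ℂ → Fin N → ℂ} {g : (Fin N → ℂ) → Fin N → ℂ}
    {h0 h1 : ℂ → ℂ} (hg : IsBiholoGerm g) (hh0 : IsBiholoGerm h0) (hh1 : IsBiholoGerm h1)
    (e0 : ∀ᶠ t in 𝓝 (0 : ℂ), g (a t) = a' (h0 t))
    (e1 : ∀ᶠ t in 𝓝 (0 : ℂ), g (b t) = b' (h1 t)) :
    AEquiv N 2 ![a, b] ![a', b'] := by
  refine ⟨g, hg, ![h0, h1], ?_, ?_⟩
  · intro i; fin_cases i <;> assumption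
  · intro i; fin_cases i
    · exact e0
    · exact e1

/-- Adding to the coordinates multiples of the equation `P = y² - x^(2m+1)` of the cusp does not
change the first component. Along the second component `P = t⁴ · (unit of the local ring)`, so
the multiples of `P` restrict to all of `t⁴ (ℂ{t²} + t^(2k+1) ℂ{t²})`. This removes all even
terms and all odd terms of order at least `2k+5`. -/
lemma kill_even {N m k : ℕ} (hm : 1 ≤ m) (hk : 1 ≤ k) {i0 i1 : Fin N} (h01 : i0 ≠ i1)
    {f : ℂ → Fin N → ℂ} (hy : ∀ᶠ t in 𝓝 (0 : ℂ), f t i1 = t ^ 2) {α β : Fin N → ℂ → ℂ}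
    (hα : ∀ j, AnalyticAt ℂ (α j) 0) (hβ : ∀ j, AnalyticAt ℂ (β j) 0)
    (hf : ∀ j, j ≠ i1 → ∀ᶠ t in 𝓝 (0 : ℂ),
      f t j = t ^ 4 * α j (t ^ 2) + t ^ (2 * k + 1) * β j (t ^ 2))
    {j0 : Fin N} (hj0 : j0 ≠ i1) (hβ0 : β j0 0 ≠ 0) :
    ∃ b : Fin N → ℂ, AEquiv N 2 ![cusp N m i0 i1, f] ![cusp N m i0 i1,
      fun t j => if j = i1 then t ^ 2 else t ^ (2 * k + 1) * (β j 0 + b j * t ^ 2)] := by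
  have hsq : ContinuousAt (fun t : ℂ => t ^ 2) 0 := by fun_prop
  obtain ⟨l, rfl⟩ : ∃ l, k = l + 1 := ⟨k - 1, by omega⟩
  obtain ⟨n, rfl⟩ : ∃ n, m = n + 1 := ⟨m - 1, by omega⟩
  choose γ hγ hγe using fun j => exists_eq_add_mul (hβ j)
  choose δ hδ hδe using fun j => exists_eq_add_mul (hγ j)
  -- Write `𝒪` for the ring `InRing (l + 1)`, where `k = l + 1`. Then `x ∈ 𝒪` and `x² ∈ t⁴ 𝒪`,
  -- whence `P = t⁴ p` with `p ∈ 𝒪` and `p 0 = 1`.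
  let x : ℂ → ℂ := fun t => t ^ 4 * α i0 (t ^ 2) + t ^ (2 * (l + 1) + 1) * β i0 (t ^ 2)
  let q : ℂ → ℂ := fun t => ((t ^ 2) ^ 2 * α i0 (t ^ 2) ^ 2 +
    (t ^ 2) ^ (2 * l + 1) * β i0 (t ^ 2) ^ 2) + t ^ (2 * (l + 1) + 1) *
      (2 * α i0 (t ^ 2) * β i0 (t ^ 2))
  have hx : InRing (l + 1) x := by
    refine ⟨fun s => s ^ 2 * α i0 s, β i0, (analyticAt_id.pow 2).mul (hα i0), hβ i0,
      .of_forall fun t => ?_⟩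
    simp only [x]; ring
  have hq : InRing (l + 1) q :=
    ⟨fun s => s ^ 2 * α i0 s ^ 2 + s ^ (2 * l + 1) * β i0 s ^ 2, fun s => 2 * α i0 s * β i0 s,
      ((analyticAt_id.pow 2).mul ((hα i0).pow 2)).add
        ((analyticAt_id.pow _).mul ((hβ i0).pow 2)),
      (analyticAt_const.mul (hα i0)).mul (hβ i0), .of_forall fun t => rfl⟩
  have hxq : ∀ t, x t ^ 2 = t ^ 4 * q t := fun t => by simp only [x, q]; ring
  let p : ℂ → ℂ := fun t => 1 - q t * x t ^ (2 * n + 1)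
  have hp : InRing (l + 1) p :=
    (InRing.of_even (A := fun _ => 1) analyticAt_const).sub (hq.mul (hx.pow _))
  have hp0 : p 0 ≠ 0 := by simp [p, q]
  have hpc : ∀ᶠ t in 𝓝 (0 : ℂ), p t ≠ 0 := by
    obtain ⟨A, B, hA, hB, h⟩ := hp
    have hA0 : A 0 ≠ 0 := by simpa [h.self_of_nhds] using hp0
    have hc : ContinuousAt (fun t => A (t ^ 2) + t ^ (2 * (l + 1) + 1) * B (t ^ 2)) 0 := by
      have h1 := (analyticAt_comp_zero (h := fun t : ℂ => t ^ 2) hA (analyticAt_id.pow 2)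
        (by simp)).continuousAt
      have h2 := (analyticAt_comp_zero (h := fun t : ℂ => t ^ 2) hB (analyticAt_id.pow 2)
        (by simp)).continuousAt
      exact h1.add ((continuousAt_id.pow _).mul h2)
    filter_upwards [h, hc.eventually_ne (y := 0) (by simpa using hA0)] with t e e'
    rwa [e]
  have hr : ∀ j, InRing (l + 1) fun t =>
      (α j (t ^ 2) + t ^ (2 * (l + 1) + 1) * δ j (t ^ 2)) * (p t)⁻¹ := fun j =>
    InRing.mul ⟨α j, δ j, hα j, hδ j, .of_forall fun t => rfl⟩ (hp.inv hp0)
  choose A B hA hB hAB using hr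
  -- `T` is a function of the coordinates restricting to `t^(2k+1)`.
  let T : (Fin N → ℂ) → ℂ := fun v => (v j0 - v i1 ^ 2 * α j0 (v i1)) / β j0 (v i1)
  have hcomp : ∀ {φ : ℂ → ℂ}, AnalyticAt ℂ φ 0 → AnalyticAt ℂ (fun v : Fin N → ℂ => φ (v i1)) 0 :=
    fun h => analyticAt_comp_zero h (analyticAt_coord i1 0) rfl
  have hT : AnalyticAt ℂ T 0 :=
    ((analyticAt_coord j0 0).sub (((analyticAt_coord i1 0).pow 2).mul (hcomp (hα j0)))).div
      (hcomp (hβ j0)) hβ0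
  let P : (Fin N → ℂ) → ℂ := fun v => v i1 ^ 2 - v i0 ^ (2 * (n + 1) + 1)
  have hP : AnalyticAt ℂ P 0 :=
    ((analyticAt_coord i1 0).pow 2).sub ((analyticAt_coord i0 0).pow _)
  have hP' : HasFDerivAt P (0 : (Fin N → ℂ) →L[ℂ] ℂ) 0 := by
    have h1 := hasFDerivAt_coord i1 0
    have h0 := hasFDerivAt_coord i0 0
    refine ((h1.pow 2).sub (h0.pow (2 * (n + 1) + 1))).congr_fderiv ?_
    ext v; simp
  let ψ : Fin N → (Fin N → ℂ) → ℂ := fun j v =>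
    if j = i1 then 0 else A j (v i1) + T v * B j (v i1)
  have hψ : ∀ j, AnalyticAt ℂ (ψ j) 0 := fun j => by
    by_cases hj : j = i1
    · simp only [ψ, hj, if_true]; exact analyticAt_const
    · simp only [ψ, hj, if_false]; exact (hcomp (hA j)).add (hT.mul (hcomp (hB j)))
  have hg : IsBiholoGerm fun (v : Fin N → ℂ) j => v j - P v * ψ j v := by
    refine isBiholoGerm_of_fderiv (L := ContinuousLinearMap.id ℂ _) ?_ ?_ ?_ (fun v hv => hv)
    · exact AnalyticAt.pi fun j => (analyticAt_coord j 0).sub (hP.mul (hψ j))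
    · ext j; simp [P]
    · refine hasFDerivAt_pi'' fun j => ?_
      have h1 := hasFDerivAt_coord j 0
      refine (h1.fun_sub (hP'.fun_mul (hψ j).differentiableAt.hasFDerivAt)).congr_fderiv ?_
      ext v; simp [P]
  refine ⟨fun j => γ j 0, aequiv_pair hg isBiholoGerm_id isBiholoGerm_id ?_ ?_⟩
  · refine .of_forall fun t => ?_
    have : P (cusp N (n + 1) i0 i1 t) = 0 := by
      simp only [P, cusp, h01.symm, if_true, if_false]; ring
    ext j; simp [this]
  · have hf' : ∀ᶠ t in 𝓝 (0 : ℂ), ∀ j, j ≠ i1 →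
        f t j = t ^ 4 * α j (t ^ 2) + t ^ (2 * (l + 1) + 1) * β j (t ^ 2) := by
      rw [Filter.eventually_all]; intro j
      by_cases hj : j = i1
      · simp [hj]
      · simpa [hj] using hf j hj
    filter_upwards [hf', hy, hpc, Filter.eventually_all.2 hAB,
      eventually_comp hsq (by simp) ((hβ j0).continuousAt.eventually_ne hβ0)] with t ef ey ep eAB eβ
    have eT : T (f t) = t ^ (2 * (l + 1) + 1) := by
      simp only [T, ey, ef j0 hj0]
      rw [div_eq_iff eβ]; ring
    have eP : P (f t) = t ^ 4 * p t := by
      have e1 : f t i0 = x t := ef i0 h01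
      have e2 : x t ^ (2 * (n + 1) + 1) = t ^ 4 * q t * x t ^ (2 * n + 1) := by
        rw [← hxq]; ring
      simp only [P, ey, e1, p, e2]; ring
    ext j
    by_cases hj : j = i1
    · simp [ψ, hj, ey]
    · simp only [ψ, hj, if_false, eT, eP, ey, ← eAB j, ef j hj]
      have : t ^ 4 * p t * ((α j (t ^ 2) + t ^ (2 * (l + 1) + 1) * δ j (t ^ 2)) * (p t)⁻¹) =
          t ^ 4 * (α j (t ^ 2) + t ^ (2 * (l + 1) + 1) * δ j (t ^ 2)) := by
        field_simp
      rw [this, hγe j (t ^ 2), hδe j (t ^ 2)]; ring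

end CurveSing

namespace CurveSing

lemma aequiv_swap {N m : ℕ} {i0 i1 i2 j0 : Fin N} (h20 : i2 ≠ i0) (h21 : i2 ≠ i1)
    (hj0 : j0 ≠ i0) (hj1 : j0 ≠ i1) (f : ℂ → Fin N → ℂ) :
    AEquiv N 2 ![cusp N m i0 i1, f]
      ![cusp N m i0 i1, fun t j => f t (Equiv.swap j0 i2 j)] := by
  have ha : AnalyticAt ℂ (fun (v : Fin N → ℂ) j => v (Equiv.swap j0 i2 j)) 0 :=
    AnalyticAt.pi fun j => analyticAt_coord _ 0
  refine aequiv_pair (g := fun v j => v (Equiv.swap j0 i2 j))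
    ⟨ha, rfl, _, ha, rfl, by simp, by simp⟩ isBiholoGerm_id isBiholoGerm_id ?_ ?_
  · refine .of_forall fun t => ?_
    ext j
    by_cases h1 : j = j0
    · subst h1; simp [cusp, *]
    by_cases h2 : j = i2
    · subst h2; simp [cusp, *]
    simp [Equiv.swap_apply_of_ne_of_ne h1 h2]
  · exact .of_forall fun t => rfl

/-- The coordinate `z = v i2` vanishes on the first component, so it may be divided by a unit
`c i2 (y)` and multiples `c j (y)` of the result may be subtracted from the other coordinates. -/
lemma aequiv_shear {N m : ℕ} {i0 i1 i2 : Fin N} (h20 : i2 ≠ i0) (h21 : i2 ≠ i1)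
    {c : Fin N → ℂ → ℂ} (hc : ∀ j, AnalyticAt ℂ (c j) 0) (hc1 : c i1 = 0) (hc2 : c i2 0 ≠ 0)
    {f f' : ℂ → Fin N → ℂ}
    (hf : ∀ᶠ t in 𝓝 (0 : ℂ), f' t = fun j => if j = i2 then f t i2 / c i2 (f t i1)
      else f t j - f t i2 / c i2 (f t i1) * c j (f t i1)) :
    AEquiv N 2 ![cusp N m i0 i1, f] ![cusp N m i0 i1, f'] := by
  have hcomp : ∀ j, AnalyticAt ℂ (fun v : Fin N → ℂ => c j (v i1)) 0 :=
    fun j => analyticAt_comp_zero (hc j) (analyticAt_coord i1 0) rfl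
  have hne : ∀ᶠ v : Fin N → ℂ in 𝓝 0, c i2 (v i1) ≠ 0 := (hcomp i2).continuousAt.eventually_ne hc2
  have hdiv : AnalyticAt ℂ (fun v : Fin N → ℂ => v i2 / c i2 (v i1)) 0 :=
    (analyticAt_coord i2 0).div (hcomp i2) hc2
  refine aequiv_pair (g := fun v j => if j = i2 then v i2 / c i2 (v i1)
      else v j - v i2 / c i2 (v i1) * c j (v i1))
    ⟨?_, ?_, fun v j => if j = i2 then v i2 * c i2 (v i1) else v j + v i2 * c j (v i1),
      ?_, ?_, ?_, ?_⟩ isBiholoGerm_id isBiholoGerm_id ?_ ?_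
  · refine AnalyticAt.pi fun j => ?_
    by_cases hj : j = i2
    · simpa [hj] using hdiv
    · simpa [hj] using (analyticAt_coord j 0).fun_sub (hdiv.fun_mul (hcomp j))
  · ext j; simp
  · refine AnalyticAt.pi fun j => ?_
    by_cases hj : j = i2
    · simpa [hj] using (analyticAt_coord i2 0).fun_mul (hcomp i2)
    · simpa [hj] using (analyticAt_coord j 0).fun_add ((analyticAt_coord i2 0).fun_mul (hcomp j))
  · ext j; simp
  · filter_upwards [hne] with v hv
    ext j
    by_cases hj : j = i2
    · subst hj; simp [h21.symm, hc1, hv]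
    · simp [h21.symm, hc1, hj]
  · filter_upwards [hne] with v hv
    ext j
    by_cases hj : j = i2
    · subst hj; simp [h21.symm, hc1, hv]
    · simp [h21.symm, hc1, hj, hv]
  · refine .of_forall fun t => ?_
    ext j
    by_cases hj : j = i2
    · subst hj; simp [cusp, *]
    · simp [cusp, *]
  · filter_upwards [hf] with t ht
    rw [ht]

/-- If `x = t^(2k+1) u(t²)` and `y = t²` along the second component, and
`ρ^((2m+1)(2k+1)-4) = u`, then the coordinate change `(x, y) ↦ (x ρ(y)⁴, y ρ(y)^(2(2m+1)))`
maps the cusp to itself with the new parameter `t ρ(y)²`, and maps the second component to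
`(s^(2k+1), s²)` with `s = t ρ(t²)^(2m+1)`. -/
lemma aequiv_weight {N m k : ℕ} (hm : 1 ≤ m) (hk : 1 ≤ k) {i0 i1 : Fin N} (h01 : i0 ≠ i1)
    {a b : ℂ} (ha : a ≠ 0) (c : Fin N → ℂ) :
    AEquiv N 2 ![cusp N m i0 i1, fun t j => if j = i0 then t ^ (2 * k + 1) * (a + b * t ^ 2)
        else if j = i1 then t ^ 2 else c j * t ^ (2 * k + 3)]
      ![cusp N m i0 i1, fun t j => if j = i0 then t ^ (2 * k + 1)
        else if j = i1 then t ^ 2 else c j * t ^ (2 * k + 3)] := by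
  have hu : AnalyticAt ℂ (fun s => a + b * s) 0 :=
    analyticAt_const.add (analyticAt_const.mul analyticAt_id)
  obtain ⟨e, he⟩ : ∃ e, (2 * m + 1) * (2 * k + 1) = e + 4 :=
    ⟨(2 * m + 1) * (2 * k + 1) - 4, by
      have : 3 * 3 ≤ (2 * m + 1) * (2 * k + 1) := Nat.mul_le_mul (by omega) (by omega)
      omega⟩
  have he0 : e ≠ 0 := by
    rintro rfl
    have : 3 * 3 ≤ (2 * m + 1) * (2 * k + 1) := Nat.mul_le_mul (by omega) (by omega)
    omega
  obtain ⟨ρ, hρ, hρ0, hρe⟩ := exists_root hu (by simpa using ha) he0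
  let w : Fin N → ℕ := fun j => if j = i0 then 4 else if j = i1 then 2 * (2 * m + 1)
    else (2 * m + 1) * (2 * k + 3)
  have hcomp : AnalyticAt ℂ (fun v : Fin N → ℂ => ρ (v i1)) 0 :=
    analyticAt_comp_zero hρ (analyticAt_coord i1 0) rfl
  have hw : ∀ j, AnalyticAt ℂ (fun v : Fin N → ℂ => ρ (v i1) ^ w j) 0 := fun j => hcomp.pow _
  have hg : IsBiholoGerm fun (v : Fin N → ℂ) j => v j * ρ (v i1) ^ w j := by
    refine isBiholoGerm_of_fderiv
      (L := ContinuousLinearMap.pi fun j => (ρ 0 ^ w j) • ContinuousLinearMap.proj j) ?_ ?_ ?_ ?_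
    · exact AnalyticAt.pi fun j => (analyticAt_coord j 0).mul (hw j)
    · ext j; simp
    · refine hasFDerivAt_pi'' fun j => ?_
      have h1 := hasFDerivAt_coord j 0
      refine (h1.fun_mul (hw j).differentiableAt.hasFDerivAt).congr_fderiv ?_
      ext v; simp
    · intro v hv
      ext j
      simpa [hρ0] using congrFun hv j
  have h0 : IsBiholoGerm fun t : ℂ => t * ρ (t ^ (2 * m + 1)) ^ 2 :=
    isBiholoGerm_mul ((analyticAt_comp_zero (h := fun t : ℂ => t ^ (2 * m + 1)) hρ
      (analyticAt_id.pow _) (by simp)).pow 2) (by simpa using hρ0)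
  have h1 : IsBiholoGerm fun t : ℂ => t * ρ (t ^ 2) ^ (2 * m + 1) :=
    isBiholoGerm_mul ((analyticAt_comp_zero (h := fun t : ℂ => t ^ 2) hρ
      (analyticAt_id.pow _) (by simp)).pow _) (by simpa using hρ0)
  refine aequiv_pair hg h0 h1 ?_ ?_
  · refine .of_forall fun t => ?_
    ext j
    by_cases hj0 : j = i0
    · subst hj0; simp only [cusp, if_true, h01.symm, if_false, w]; ring
    by_cases hj1 : j = i1
    · subst hj1; simp only [cusp, if_true, hj0, if_false, w, mul_pow, ← pow_mul]
    · simp [cusp, hj0, hj1]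
  · have hsq : ContinuousAt (fun t : ℂ => t ^ 2) 0 := by fun_prop
    filter_upwards [eventually_comp hsq (by simp) hρe] with t ht
    ext j
    by_cases hj0 : j = i0
    · subst hj0; simp only [if_true, h01.symm, if_false, w]
      rw [← ht, mul_pow, ← pow_mul, he, pow_add]; ring
    by_cases hj1 : j = i1
    · subst hj1; simp only [if_true, hj0, if_false, w, mul_pow, ← pow_mul]
      rw [mul_comm 2]
    · simp only [hj0, hj1, h01.symm, if_true, if_false, w, mul_pow, ← pow_mul]; ring

lemma swap_eq_iff {N : ℕ} {i j l : Fin N} (hi : i ≠ l) (hj : j ≠ l) (r : Fin N) :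
    Equiv.swap i j r = l ↔ r = l := by
  rw [Equiv.swap_apply_eq_iff, Equiv.swap_apply_of_ne_of_ne hi.symm hj.symm]

/-- Reduction to `(0, t², t^(2k+1))`. -/
lemma aequiv_third {N m k : ℕ} {i0 i1 i2 : Fin N} (h01 : i0 ≠ i1)
    (h20 : i2 ≠ i0) (h21 : i2 ≠ i1) {a b : Fin N → ℂ} (ha : a i2 ≠ 0) :
    AEquiv N 2 ![cusp N m i0 i1,
      fun t j => if j = i1 then t ^ 2 else t ^ (2 * k + 1) * (a j + b j * t ^ 2)]
    ![cusp N m i0 i1, fun t j => if j = i0 then 0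
      else if j = i1 then t ^ 2 else if j = i2 then t ^ (2 * k + 1) else 0] := by
  refine aequiv_shear h20 h21 (c := fun l s => if l = i1 then 0 else a l + b l * s) ?_ ?_ ?_ ?_
  · intro l
    by_cases hl : l = i1
    · simp only [hl, if_true]; exact analyticAt_const
    · simp only [hl, if_false]
      exact analyticAt_const.add (analyticAt_const.mul analyticAt_id)
  · ext s; simp
  · simpa [h21] using ha
  · have hc : ContinuousAt (fun t : ℂ => a i2 + b i2 * t ^ 2) 0 := by fun_prop
    filter_upwards [hc.eventually_ne (y := 0) (by simpa using ha)] with t ht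
    have hq : ∀ x : ℂ, x * (a i2 + b i2 * t ^ 2) / (a i2 + b i2 * t ^ 2) = x :=
      fun x => mul_div_cancel_right₀ x ht
    ext l
    simp only [h21, if_true, if_false, hq]
    by_cases hl2 : l = i2
    · simp [hl2, h20, h21]
    · by_cases hl1 : l = i1
      · simp [hl1, h01.symm, h21.symm]
      · simp [hl1, hl2]

/-- Reduction to `(t^(2k+1), t², t^(2k+3))`. -/
lemma aequiv_second {N m k : ℕ} {i0 i1 i2 : Fin N} (h01 : i0 ≠ i1)
    (h20 : i2 ≠ i0) (h21 : i2 ≠ i1) {b : Fin N → ℂ} (hb : b i2 ≠ 0) :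
    AEquiv N 2 ![cusp N m i0 i1, fun t j => if j = i0 then t ^ (2 * k + 1)
        else if j = i1 then t ^ 2 else b j * t ^ (2 * k + 3)]
    ![cusp N m i0 i1, fun t j => if j = i0 then t ^ (2 * k + 1)
      else if j = i1 then t ^ 2 else if j = i2 then t ^ (2 * k + 3) else 0] := by
  refine aequiv_shear h20 h21
    (c := fun l s => if l = i0 then 0 else if l = i1 then 0 else b l) ?_ ?_ ?_ ?_
  · exact fun l => analyticAt_const
  · ext s; simp
  · simpa [h21, h20] using hb
  · refine .of_forall fun t => ?_
    ext l
    simp only [h20, h21, if_false]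
    by_cases hl2 : l = i2
    · subst hl2; simp [h20, h21, hb]
    by_cases hl0 : l = i0
    · simp [hl0, h20.symm]
    by_cases hl1 : l = i1
    · simp [hl1, h01.symm, h21.symm]
    · simp only [hl0, hl1, hl2, if_false]; field_simp; ring

/-- The three normal forms, for a second component whose coordinates other than `y = t²` are
combinations of `t^(2k+1)` and `t^(2k+3)`. -/
lemma normal_forms {N m k : ℕ} (hm : 1 ≤ m) (hk : 1 ≤ k) {i0 i1 i2 : Fin N} (h01 : i0 ≠ i1)
    (h20 : i2 ≠ i0) (h21 : i2 ≠ i1) {a b : Fin N → ℂ} {j0 : Fin N} (hj0 : j0 ≠ i1)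
    (ha : a j0 ≠ 0) {F : Fin 2 → ℂ → Fin N → ℂ} (hF : AEquiv N 2 F ![cusp N m i0 i1,
      fun t j => if j = i1 then t ^ 2 else t ^ (2 * k + 1) * (a j + b j * t ^ 2)]) :
    AEquiv N 2 F ![cusp N m i0 i1, fun t j => if j = i0 then t ^ (2 * k + 1)
      else if j = i1 then t ^ 2 else 0] ∨
    AEquiv N 2 F ![cusp N m i0 i1, fun t j => if j = i0 then t ^ (2 * k + 1)
      else if j = i1 then t ^ 2 else if j = i2 then t ^ (2 * k + 3) else 0] ∨
    AEquiv N 2 F ![cusp N m i0 i1, fun t j => if j = i0 then 0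
      else if j = i1 then t ^ 2 else if j = i2 then t ^ (2 * k + 1) else 0] := by
  by_cases hA : ∃ j, j ≠ i0 ∧ j ≠ i1 ∧ a j ≠ 0
  · obtain ⟨j, hji0, hji1, hj⟩ := hA
    have hs := aequiv_swap (m := m) h20 h21 hji0 hji1
      fun t j => if j = i1 then t ^ 2 else t ^ (2 * k + 1) * (a j + b j * t ^ 2)
    simp only [swap_eq_iff hji1 h21] at hs
    exact .inr (.inr ((hF.trans hs).trans
      (aequiv_third (a := fun r => a (Equiv.swap j i2 r)) (b := fun r => b (Equiv.swap j i2 r))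
        h01 h20 h21 (by simpa using hj))))
  · push Not at hA
    have hj : j0 = i0 := by
      by_contra h; exact ha (hA j0 h hj0)
    subst hj
    have hF' := hF
    have he : (fun t j => if j = i1 then t ^ 2 else t ^ (2 * k + 1) * (a j + b j * t ^ 2)) =
        fun t j => if j = j0 then t ^ (2 * k + 1) * (a j0 + b j0 * t ^ 2)
          else if j = i1 then t ^ 2 else b j * t ^ (2 * k + 3) := by
      ext t j
      by_cases h0 : j = j0
      · subst h0; simp [h01]
      by_cases h1 : j = i1
      · simp [h1, h01.symm]
      · simp only [h0, h1, if_false, hA j h0 h1]; ring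
    rw [he] at hF'
    replace hF' := hF'.trans (aequiv_weight hm hk h01 ha b)
    by_cases hB : ∃ j, j ≠ j0 ∧ j ≠ i1 ∧ b j ≠ 0
    · obtain ⟨j, hji0, hji1, hj⟩ := hB
      have hs := aequiv_swap (m := m) h20 h21 hji0 hji1
        fun t j => if j = j0 then t ^ (2 * k + 1)
          else if j = i1 then t ^ 2 else b j * t ^ (2 * k + 3)
      simp only [swap_eq_iff hji1 h21, swap_eq_iff hji0 h20] at hs
      exact .inr (.inl ((hF'.trans hs).trans
        (aequiv_second (b := fun r => b (Equiv.swap j i2 r)) h01 h20 h21 (by simpa using hj))))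
    · push Not at hB
      refine .inl ?_
      convert hF' using 4 with t
      ext j
      by_cases h0 : j = j0
      · simp [h0]
      by_cases h1 : j = i1
      · simp [h1, h01.symm]
      · simp [h0, h1, hB j h0 h1]

end CurveSing

namespace CurveSing

/-! ### The value semigroup -/

lemma ordAt_of_order {g : ℂ → ℂ} (hg : AnalyticAt ℂ g 0) {n : ℕ}
    (h : analyticOrderAt g 0 = n) : (∃ k, iteratedDeriv k g 0 ≠ 0) ∧ n = ordAt g := by
  obtain ⟨h1, h2⟩ := (analyticOrderAt_eq_nat_iff_iteratedDeriv_eq_zero hg).1 h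
  refine ⟨⟨n, h2⟩, le_antisymm ?_ (Nat.sInf_le h2)⟩
  refine le_csInf ⟨n, h2⟩ fun k hk => ?_
  by_contra hlt
  exact hk (h1 k (by omega))

lemma mem_valueSemigroup_iff {n : ℕ} {f : ℂ → Fin n → ℂ} (hf : IsCurveGerm n f) {v : ℕ} :
    v ∈ valueSemigroup n f ↔ ∃ φ : (Fin n → ℂ) → ℂ, AnalyticAt ℂ φ 0 ∧ φ 0 = 0 ∧
      analyticOrderAt (fun t => φ (f t)) 0 = v := by
  constructor
  · rintro ⟨φ, hφ, h0, ⟨k, hk⟩, hv⟩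
    have ha := analyticAt_comp_zero hφ hf.1 hf.2
    refine ⟨φ, hφ, h0, ?_⟩
    have hne : analyticOrderAt (fun t => φ (f t)) 0 ≠ ⊤ := by
      intro h
      have h' : (fun t => φ (f t)) =ᶠ[𝓝 0] fun _ => 0 := analyticOrderAt_eq_top.1 h
      rw [h'.iteratedDeriv_eq] at hk
      simp at hk
    obtain ⟨o, ho⟩ := ENat.ne_top_iff_exists.1 hne
    rw [hv, ← (ordAt_of_order ha ho.symm).2, ho]
  · rintro ⟨φ, hφ, h0, hv⟩
    have := ordAt_of_order (analyticAt_comp_zero hφ hf.1 hf.2) hv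
    exact ⟨φ, hφ, h0, this.1, this.2⟩

lemma IsCurveGerm.pad {d N : ℕ} {f : ℂ → Fin d → ℂ} (hf : IsCurveGerm d f) :
    IsCurveGerm N (pad d N f) := by
  refine ⟨AnalyticAt.pi fun j => ?_, ?_⟩
  · by_cases hj : (j : ℕ) < d
    · simp only [CurveSing.pad, hj, dif_pos]
      exact (analyticAt_coord (⟨j, hj⟩ : Fin d) (f 0)).comp hf.1
    · simpa only [CurveSing.pad, hj, dif_neg, not_false_eq_true] using analyticAt_const
  · ext j; simp [CurveSing.pad, hf.2]

lemma valueSemigroup_pad {d N : ℕ} (hd : d ≤ N) {f : ℂ → Fin d → ℂ} (hf : IsCurveGerm d f) :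
    valueSemigroup N (pad d N f) = valueSemigroup d f := by
  ext v
  rw [mem_valueSemigroup_iff hf, mem_valueSemigroup_iff hf.pad]
  constructor
  · rintro ⟨φ, hφ, h0, hv⟩
    have hp : AnalyticAt ℂ (fun v : Fin d → ℂ => pad d N (fun _ => v) 0) 0 := by
      refine AnalyticAt.pi fun j => ?_
      by_cases hj : (j : ℕ) < d
      · simpa only [CurveSing.pad, hj, dif_pos] using analyticAt_coord (⟨j, hj⟩ : Fin d) 0
      · simpa only [CurveSing.pad, hj, dif_neg, not_false_eq_true] using analyticAt_const
    have hp0 : pad d N (fun _ => (0 : Fin d → ℂ)) 0 = 0 := by ext j; simp [pad]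
    exact ⟨fun v => φ (pad d N (fun _ => v) 0), analyticAt_comp_zero hφ hp hp0, by simp [hp0, h0],
      hv⟩
  · rintro ⟨φ, hφ, h0, hv⟩
    have hr : AnalyticAt ℂ (fun (v : Fin N → ℂ) (j : Fin d) => v (Fin.castLE hd j)) 0 :=
      AnalyticAt.pi fun j => analyticAt_coord _ 0
    refine ⟨fun v => φ fun j => v (Fin.castLE hd j), analyticAt_comp_zero hφ hr rfl, h0, ?_⟩
    have e : (fun t => φ fun j => pad d N f t (Fin.castLE hd j)) = fun t => φ (f t) := by
      funext t
      have : (fun j => pad d N f t (Fin.castLE hd j)) = f t := by funext j; simp [pad]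
      rw [this]
    rw [← hv, ← e]

/-- What the hypothesis on the invariant pair says once `2` is known to be a value. -/
lemma odd_values {m d : ℕ} {f : ℂ → Fin d → ℂ} (h2 : 2 ∈ valueSemigroup d f)
    (hinv : 2 < invPairFst d f ∨ (invPairFst d f = 2 ∧ 2 * m + 1 ≤ invPairSnd d f)) :
    (∀ k, 2 * k + 1 ∈ valueSemigroup d f → m ≤ k) ∧ ∃ v ∈ valueSemigroup d f, ¬ 2 ∣ v := by
  have hle : invPairFst d f ≤ 2 := Nat.sInf_le ⟨h2, by omega⟩
  obtain ⟨hp, hq⟩ := hinv.resolve_left (by omega)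
  constructor
  · intro k hk
    have h1 : invPairFst d f ≤ 2 * k + 1 := Nat.sInf_le ⟨hk, by omega⟩
    have h3 : invPairSnd d f ≤ 2 * k + 1 := Nat.sInf_le ⟨hk, by omega, by rw [hp]; omega⟩
    omega
  · by_contra hno
    push Not at hno
    have : invPairSnd d f = 0 := by
      rw [invPairSnd, Nat.sInf_eq_zero]
      right
      ext v
      simp only [Set.mem_ofPred_eq, Set.mem_empty_iff_false, iff_false, hp]
      exact fun h => h.2.2 (hno v h.1)
    omega

/-! ### Reduction to a parametrisation with `y = t²` -/

lemma iteratedDeriv_coord {n : ℕ} {f : ℂ → Fin n → ℂ} (hf : AnalyticAt ℂ f 0) (k : ℕ)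
    (j : Fin n) : iteratedDeriv k (fun t => f t j) 0 = iteratedDeriv k f 0 j := by
  have := (ContinuousLinearMap.proj (R := ℂ) (φ := fun _ : Fin n => ℂ) j).iteratedFDeriv_comp_left
    (hf.contDiffAt (n := k)) le_rfl
  rw [iteratedDeriv_eq_iteratedFDeriv, iteratedDeriv_eq_iteratedFDeriv]
  exact congrArg (fun A => A fun _ => 1) this

/-- Two curves with the same `2`-jet differ by a multiple of `t³`. -/
lemma exists_of_jet {n : ℕ} {f g : ℂ → Fin n → ℂ} (hf : AnalyticAt ℂ f 0)
    (hg : AnalyticAt ℂ g 0) (h : jet n 2 f = jet n 2 g) (j : Fin n) :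
    ∃ w : ℂ → ℂ, AnalyticAt ℂ w 0 ∧ ∀ᶠ t in 𝓝 (0 : ℂ), f t j = g t j + t ^ 3 * w t := by
  have hfj : AnalyticAt ℂ (fun t => f t j) 0 := (analyticAt_coord j _).comp hf
  have hgj : AnalyticAt ℂ (fun t => g t j) 0 := (analyticAt_coord j _).comp hg
  have h3 : ((3 : ℕ) : ℕ∞) ≤ analyticOrderAt (fun t => f t j - g t j) 0 := by
    rw [natCast_le_analyticOrderAt_iff_iteratedDeriv_eq_zero (hfj.fun_sub hgj)]
    intro i hi
    rw [iteratedDeriv_fun_sub hfj.contDiffAt hgj.contDiffAt, iteratedDeriv_coord hf,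
      iteratedDeriv_coord hg, sub_eq_zero]
    exact congrFun (congrFun h ⟨i, hi⟩) j
  obtain ⟨w, hw, he⟩ := (natCast_le_analyticOrderAt (hfj.fun_sub hgj)).1 h3
  refine ⟨w, hw, ?_⟩
  filter_upwards [he] with t ht
  simp only [sub_zero, smul_eq_mul] at ht
  rw [← ht]; ring

/-- The classification for curves in `ℂ^N` whose second component is
`(O(t³), t² + O(t³), O(t³), …)`. -/
lemma classification_aux {N m : ℕ} (hm : 1 ≤ m) {i0 i1 i2 : Fin N} (h01 : i0 ≠ i1)
    (h20 : i2 ≠ i0) (h21 : i2 ≠ i1) {f : ℂ → Fin N → ℂ} (hf : IsCurveGerm N f)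
    (hjet : ∀ j, ∃ w : ℂ → ℂ, AnalyticAt ℂ w 0 ∧
      ∀ᶠ t in 𝓝 (0 : ℂ), f t j = (if j = i1 then t ^ 2 else 0) + t ^ 3 * w t)
    (hinv : 2 < invPairFst N f ∨ (invPairFst N f = 2 ∧ 2 * m + 1 ≤ invPairSnd N f)) :
    ∃ k, m ≤ k ∧
    (AEquiv N 2 ![cusp N m i0 i1, f] ![cusp N m i0 i1, fun t j => if j = i0 then t ^ (2 * k + 1)
      else if j = i1 then t ^ 2 else 0] ∨
    AEquiv N 2 ![cusp N m i0 i1, f] ![cusp N m i0 i1, fun t j => if j = i0 then t ^ (2 * k + 1)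
      else if j = i1 then t ^ 2 else if j = i2 then t ^ (2 * k + 3) else 0] ∨
    AEquiv N 2 ![cusp N m i0 i1, f] ![cusp N m i0 i1, fun t j => if j = i0 then 0
      else if j = i1 then t ^ 2 else if j = i2 then t ^ (2 * k + 1) else 0]) := by
  choose w hw hwe using hjet
  -- The new parameter `h = t ρ` is a square root of `y = t² (1 + t w)`.
  obtain ⟨ρ, hρ, hρ0, hρe⟩ := exists_root (u := fun t => 1 + t * w i1 t)
    (analyticAt_const.add (analyticAt_id.mul (hw i1))) (by simp) two_ne_zero
  let h : ℂ → ℂ := fun t => t * ρ t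
  have hh : IsBiholoGerm h := isBiholoGerm_mul hρ hρ0
  have hha := hh.1
  have hh0 := hh.2.1
  have hyh : ∀ᶠ t in 𝓝 (0 : ℂ), f t i1 = h t ^ 2 := by
    filter_upwards [hwe i1, hρe] with t e1 e2
    rw [e1]; simp only [h, mul_pow, e2, if_true]; ring
  have hord2 : analyticOrderAt (fun t => h t ^ 2) 0 = (2 : ℕ) := by
    rw [(hha.fun_pow 2).analyticOrderAt_eq_natCast]
    refine ⟨fun t => ρ t ^ 2, hρ.fun_pow 2, pow_ne_zero 2 hρ0, .of_forall fun t => ?_⟩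
    simp only [h, sub_zero, smul_eq_mul]; ring
  have h2mem : 2 ∈ valueSemigroup N f := by
    rw [mem_valueSemigroup_iff hf]
    exact ⟨fun v => v i1, analyticAt_coord i1 0, rfl, by rw [analyticOrderAt_congr hyh, hord2]⟩
  obtain ⟨hoddle, hodd⟩ := odd_values h2mem hinv
  obtain ⟨h', ha', h0', hl, hr⟩ := hh.2.2
  obtain ⟨η, hη, hηe⟩ := exists_eq_add_mul ha'
  simp only [h0', zero_add] at hηe
  let F : ℂ → Fin N → ℂ := fun s => f (h' s)
  have hFf : ∀ᶠ t in 𝓝 (0 : ℂ), f t = F (h t) := by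
    filter_upwards [hl] with t ht
    simp only [F, ht]
  have hFy : ∀ᶠ t in 𝓝 (0 : ℂ), F t i1 = t ^ 2 := by
    filter_upwards [hr, eventually_comp ha'.continuousAt h0' hyh] with t e1 e2
    simp only [F, e2, e1]
  have hFj : ∀ j, ∃ c α : ℂ → ℂ, AnalyticAt ℂ c 0 ∧ AnalyticAt ℂ α 0 ∧ (j ≠ i1 →
      ∀ᶠ t in 𝓝 (0 : ℂ), F t j = t ^ 4 * α (t ^ 2) + t ^ 3 * c (t ^ 2)) := by
    intro j
    obtain ⟨c, α, hc, hα, he⟩ := exists_even_odd (f := fun s => η s ^ 3 * w j (h' s))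
      ((hη.pow 3).mul (analyticAt_comp_zero (hw j) ha' h0'))
    refine ⟨c, α, hc, hα, fun hj => ?_⟩
    filter_upwards [he, eventually_comp ha'.continuousAt h0' (hwe j)] with t e1 e2
    have e3 : F t j = t ^ 3 * (η t ^ 3 * w j (h' t)) := by
      simp only [F]
      rw [e2, if_neg hj]
      nth_rw 1 [hηe t]; ring
    rw [e3, e1]; ring
  choose c α hc hα hFe using hFj
  -- Some odd part is nonzero, as otherwise all values would be even.
  have hex : ∃ j, j ≠ i1 ∧ analyticOrderAt (c j) 0 ≠ ⊤ := by
    by_contra hno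
    push Not at hno
    obtain ⟨v, hv, hv2⟩ := hodd
    obtain ⟨φ, hφ, hφ0, ho⟩ := (mem_valueSemigroup_iff hf).1 hv
    let a : ℂ → Fin N → ℂ := fun σ j => if j = i1 then σ else σ ^ 2 * α j σ
    have haa : AnalyticAt ℂ a 0 := by
      refine AnalyticAt.pi fun j => ?_
      by_cases hj : j = i1
      · simp only [hj, if_true]
        exact analyticAt_id
      · simpa [a, hj] using (analyticAt_id.fun_pow 2).fun_mul (hα j)
    have ha0 : a 0 = 0 := by ext j; simp [a]
    have hφa : AnalyticAt ℂ (fun σ => φ (a σ)) 0 := analyticAt_comp_zero hφ haa ha0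
    have hFa : ∀ᶠ t in 𝓝 (0 : ℂ), F t = a (t ^ 2) := by
      have hall : ∀ᶠ t in 𝓝 (0 : ℂ), ∀ j, F t j = a (t ^ 2) j := by
        rw [Filter.eventually_all]
        intro j
        by_cases hj : j = i1
        · subst hj; simpa [a] using hFy
        · have hsq : ContinuousAt (fun t : ℂ => t ^ 2) 0 := by fun_prop
          filter_upwards [hFe j hj,
            eventually_comp hsq (by simp) (analyticOrderAt_eq_top.1 (hno j hj))] with t e1 e2
          rw [e1, e2]; simp only [a, hj, if_false]; ring
      filter_upwards [hall] with t ht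
      exact funext ht
    have hcomp : (fun t => φ (f t)) =ᶠ[𝓝 0] (fun σ => φ (a σ)) ∘ fun t => h t ^ 2 := by
      filter_upwards [hFf, eventually_comp hha.continuousAt hh0 hFa] with t e1 e2
      simp only [Function.comp_apply, e1, e2]
    have hz : h 0 ^ 2 = 0 := by simp [hh0]
    rw [analyticOrderAt_congr hcomp, AnalyticAt.analyticOrderAt_comp (by rwa [hz])
      (hha.fun_pow 2)] at ho
    simp only [hz, sub_zero, hord2] at ho
    have hne : analyticOrderAt (fun σ => φ (a σ)) 0 ≠ ⊤ := by
      intro htop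
      rw [htop, ENat.top_mul (by norm_num)] at ho
      exact ENat.top_ne_natCast _ ho
    obtain ⟨o, ho'⟩ := ENat.ne_top_iff_exists.1 hne
    rw [← ho'] at ho
    have : o * 2 = v := by exact_mod_cast ho
    exact hv2 ⟨o, by omega⟩
  obtain ⟨j1, hj1, hj1o⟩ := hex
  obtain ⟨j0, hj0, hmin⟩ := Finset.exists_min_image (Finset.univ.filter fun j => j ≠ i1)
    (fun j => analyticOrderAt (c j) 0) ⟨j1, by simpa using hj1⟩
  simp only [Finset.mem_filter, Finset.mem_univ, true_and] at hj0 hmin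
  obtain ⟨l, hl0⟩ := ENat.ne_top_iff_exists.1
    (ne_top_of_le_ne_top hj1o (hmin j1 hj1))
  have hβex : ∀ j, ∃ β : ℂ → ℂ, AnalyticAt ℂ β 0 ∧
      (j ≠ i1 → ∀ᶠ s in 𝓝 (0 : ℂ), c j s = s ^ l * β s) := by
    intro j
    by_cases hj : j = i1
    · exact ⟨fun _ => 0, analyticAt_const, fun h => absurd hj h⟩
    · obtain ⟨β, hβ, he⟩ := (natCast_le_analyticOrderAt (hc j)).1 (hl0 ▸ hmin j hj)
      exact ⟨β, hβ, fun _ => by simpa using he⟩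
  choose β hβ hβe using hβex
  have hβ0 : β j0 0 ≠ 0 := by
    intro hz
    obtain ⟨γ, hγ, hγe⟩ := exists_eq_add_mul (hβ j0)
    have : ((l + 1 : ℕ) : ℕ∞) ≤ analyticOrderAt (c j0) 0 := by
      rw [natCast_le_analyticOrderAt (hc j0)]
      refine ⟨γ, hγ, ?_⟩
      filter_upwards [hβe j0 hj0] with s hs
      rw [hs, hγe s, hz, sub_zero, smul_eq_mul]; ring
    rw [← hl0] at this
    have : l + 1 ≤ l := by exact_mod_cast this
    omega
  have hsq : ContinuousAt (fun t : ℂ => t ^ 2) 0 := by fun_prop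
  have hFβ : ∀ j, j ≠ i1 → ∀ᶠ t in 𝓝 (0 : ℂ),
      F t j = t ^ 4 * α j (t ^ 2) + t ^ (2 * (l + 1) + 1) * β j (t ^ 2) := by
    intro j hj
    filter_upwards [hFe j hj, eventually_comp hsq (by simp) (hβe j hj)] with t e1 e2
    rw [e1, e2]; ring
  have hmk : m ≤ l + 1 := by
    apply hoddle
    rw [mem_valueSemigroup_iff hf]
    have hφ : AnalyticAt ℂ (fun v : Fin N → ℂ => v j0 - v i1 ^ 2 * α j0 (v i1)) 0 :=
      (analyticAt_coord j0 0).sub (((analyticAt_coord i1 0).pow 2).mul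
        (analyticAt_comp_zero (hα j0) (analyticAt_coord i1 0) rfl))
    refine ⟨_, hφ, by simp, ?_⟩
    rw [(analyticAt_comp_zero hφ hf.1 hf.2).analyticOrderAt_eq_natCast]
    refine ⟨fun t => ρ t ^ (2 * (l + 1) + 1) * β j0 (h t ^ 2),
      (hρ.pow _).mul (analyticAt_comp_zero (hβ j0) (hha.fun_pow 2) (by simp [hh0])),
      mul_ne_zero (pow_ne_zero _ hρ0) (by simpa [hh0] using hβ0), ?_⟩
    filter_upwards [hFf, eventually_comp hha.continuousAt hh0 hFy,
      eventually_comp hha.continuousAt hh0 (hFβ j0 hj0)] with t e1 e2 e3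
    rw [e1, e2, e3, sub_zero, smul_eq_mul, ← mul_assoc, ← mul_pow]
    ring
  have hstep0 : AEquiv N 2 ![cusp N m i0 i1, f] ![cusp N m i0 i1, F] :=
    aequiv_pair (g := fun v => v) isBiholoGerm_id isBiholoGerm_id hh (.of_forall fun _ => rfl) hFf
  obtain ⟨b, hb⟩ := kill_even (m := m) hm (Nat.succ_pos l) h01 hFy hα hβ hFβ hj0 hβ0
  exact ⟨l + 1, hmk, normal_forms hm (Nat.succ_pos l) h01 h20 h21 (a := fun j => β j 0) hj0 hβ0
    (hstep0.trans hb)⟩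

/-- In ambient dimension at most `1` the second component vanishes identically, because the
first one fills a neighbourhood of the origin; then there are no values at all. -/
lemma two_le_dim {d m : ℕ} {F : Fin 2 → ℂ → Fin d → ℂ} (hF : IsMultigerm d 2 F)
    (h1 : F 0 = pad 2 d fun t => ![t ^ 2, t ^ (2*m+1)]) (hp : 0 < invPairFst d (F 1)) :
    2 ≤ d := by
  by_contra hd
  have hz : ∀ᶠ t in 𝓝 (0 : ℂ), F 1 t = 0 := by
    obtain ⟨ε, hε, hint⟩ := hF.2
    have hc : ContinuousAt (fun t => ‖F 1 t‖) 0 := (hF.1 1).1.continuousAt.norm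
    have hε2 : (fun t => ‖F 1 t‖) 0 < ε ^ 2 := by
      simp only [(hF.1 1).2, norm_zero]; positivity
    filter_upwards [hc.eventually_lt_const hε2, Metric.ball_mem_nhds (0 : ℂ) hε] with t ht htε
    obtain rfl | rfl : d = 0 ∨ d = 1 := by omega
    · exact Subsingleton.elim _ _
    · obtain ⟨s, hs⟩ := IsAlgClosed.exists_pow_nat_eq (F 1 t 0) (n := 2) (by norm_num)
      have hsn : ‖s‖ < ε := by
        refine lt_of_pow_lt_pow_left₀ 2 hε.le ?_
        rw [← norm_pow, hs]
        exact (norm_le_pi_norm (F 1 t) 0).trans_lt ht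
      have heq : F 0 s = F 1 t := by
        rw [h1]; ext j
        rw [Subsingleton.elim j 0, ← hs]; simp [pad]
      rw [← heq]
      exact hint 0 1 (by decide) s t hsn (by simpa using htε) heq
  have : invPairFst d (F 1) = 0 := by
    rw [invPairFst, Nat.sInf_eq_zero]
    right
    ext v
    simp only [Set.mem_ofPred_eq, Set.mem_empty_iff_false, iff_false]
    rintro ⟨hv, -⟩
    obtain ⟨φ, hφ, h0, ho⟩ := (mem_valueSemigroup_iff (hF.1 1)).1 hv
    rw [analyticOrderAt_eq_top.2 (by filter_upwards [hz] with t ht; rw [ht, h0])] at ho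
    exact ENat.top_ne_natCast _ ho
  omega

end CurveSing

open CurveSing in
/-- Classification of simple pairs with first component `(t², t^{2m+1})`, second
component of `2`-jet `(0, t², 0, …, 0)` and invariant pair `≥ (2, 2m+1)`
(lexicographically). -/
theorem classification_first_cusp_second_mult_two (d m : ℕ) (hm : 1 ≤ m)
    (F : Fin 2 → ℂ → Fin d → ℂ)
    (hF : IsMultigerm d 2 F) (hsimple : Simple d 2 F)
    (h1 : F 0 = pad 2 d fun t => ![t ^ 2, t ^ (2*m+1)])
    (h2 : jet d 2 (F 1) = jet d 2 (pad 2 d fun t => ![(0 : ℂ), t ^ 2]))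
    (hinv : 2 < invPairFst d (F 1) ∨
      (invPairFst d (F 1) = 2 ∧ 2*m+1 ≤ invPairSnd d (F 1))) :
    (∃ n : ℕ, m ≤ n ∧ StablyAEquiv d 2 2 F
      ![fun t => ![t ^ 2, t ^ (2*m+1)], fun t => ![t ^ (2*n+1), t ^ 2]]) ∨
    (∃ n : ℕ, m ≤ n ∧ StablyAEquiv d 3 2 F
      ![pad 2 3 fun t => ![t ^ 2, t ^ (2*m+1)],
        fun t => ![t ^ (2*n+1), t ^ 2, t ^ (2*n+3)]]) ∨
    (∃ n : ℕ, m ≤ n ∧ StablyAEquiv d 3 2 F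
      ![pad 2 3 fun t => ![t ^ 2, t ^ (2*m+1)],
        fun t => ![(0 : ℂ), t ^ 2, t ^ (2*n+1)]]) := by
  have hd : 2 ≤ d := two_le_dim hF h1 (by omega)
  have hf : IsCurveGerm (d + 3) (pad d (d + 3) (F 1)) := (hF.1 1).pad
  have hp : invPairFst (d + 3) (pad d (d + 3) (F 1)) = invPairFst d (F 1) := by
    simp only [invPairFst, valueSemigroup_pad (Nat.le_add_right d 3) (hF.1 1)]
  have hq : invPairSnd (d + 3) (pad d (d + 3) (F 1)) = invPairSnd d (F 1) := by
    simp only [invPairSnd, hp, valueSemigroup_pad (Nat.le_add_right d 3) (hF.1 1)]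
  have hg : IsCurveGerm d (pad 2 d fun t => ![(0 : ℂ), t ^ 2]) := by
    refine IsCurveGerm.pad ⟨AnalyticAt.pi fun j => ?_, ?_⟩
    · fin_cases j
      · exact analyticAt_const
      · exact analyticAt_id.fun_pow 2
    · ext j; fin_cases j <;> simp
  have hjet : ∀ j : Fin (d + 3), ∃ w : ℂ → ℂ, AnalyticAt ℂ w 0 ∧ ∀ᶠ t in 𝓝 (0 : ℂ),
      pad d (d + 3) (F 1) t j = (if j = ⟨1, by omega⟩ then t ^ 2 else 0) + t ^ 3 * w t := by
    intro j
    by_cases hj : (j : ℕ) < d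
    · obtain ⟨w, hw, he⟩ := exists_of_jet (hF.1 1).1 hg.1 h2 ⟨j, hj⟩
      refine ⟨w, hw, ?_⟩
      filter_upwards [he] with t ht
      obtain ⟨j, hj'⟩ := j
      simp only [pad, hj, dif_pos] at ht ⊢
      rw [ht]
      congr 1
      rcases j with _ | _ | j <;> simp
    · refine ⟨fun _ => 0, analyticAt_const, .of_forall fun t => ?_⟩
      have h1j : j ≠ ⟨1, by omega⟩ := fun h => by
        have := congrArg Fin.val h
        simp only at this
        omega
      rw [if_neg h1j]
      simp [pad, hj]
  have hcusp : ∀ t, pad 2 (d + 3) (fun t => ![t ^ 2, t ^ (2*m+1)]) t =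
      cusp (d + 3) m ⟨0, by omega⟩ ⟨1, by omega⟩ t := by
    intro t
    ext ⟨j, hj⟩
    rcases j with _ | _ | j <;> simp [pad, cusp]
  have hpad : ∀ M, 2 ≤ M → ∀ t, pad M (d + 3) (pad 2 M fun t => ![t ^ 2, t ^ (2*m+1)]) t =
      cusp (d + 3) m ⟨0, by omega⟩ ⟨1, by omega⟩ t := by
    intro M hM t
    rw [← hcusp]
    ext ⟨j, hj⟩
    simp only [pad]
    split_ifs <;> first | rfl | omega
  have hsrc : (fun i => pad d (d + 3) (F i)) =
      ![cusp (d + 3) m ⟨0, by omega⟩ ⟨1, by omega⟩, pad d (d + 3) (F 1)] := by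
    funext i
    fin_cases i
    · funext t
      simp only [Fin.zero_eta, h1, Matrix.cons_val_zero]
      exact hpad d hd t
    · rfl
  obtain ⟨k, hmk, h | h | h⟩ := classification_aux hm (i0 := ⟨0, by omega⟩) (i1 := ⟨1, by omega⟩)
    (i2 := ⟨2, by omega⟩) (by simp) (by simp) (by simp) hf hjet (by rwa [hp, hq])
  · refine .inl ⟨k, hmk, d + 3, by omega, by omega, ?_⟩
    rw [hsrc]
    convert h using 1
    funext i t
    fin_cases i
    · exact hcusp t
    · ext ⟨j, hj⟩
      rcases j with _ | _ | j <;> simp [pad]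
  · refine .inr (.inl ⟨k, hmk, d + 3, by omega, by omega, ?_⟩)
    rw [hsrc]
    convert h using 1
    funext i t
    fin_cases i
    · exact hpad 3 (by omega) t
    · ext ⟨j, hj⟩
      rcases j with _ | _ | _ | j <;> simp [pad]
  · refine .inr (.inr ⟨k, hmk, d + 3, by omega, by omega, ?_⟩)
    rw [hsrc]
    convert h using 1
    funext i t
    fin_cases i
    · exact hpad 3 (by omega) t
    · ext ⟨j, hj⟩
      rcases j with _ | _ | _ | j <;> simp [pad]
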